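/- Let T > 0, ν > 0, C₀ > 0, let k ≥ 1 be a natural number, and define η̄(t) = (2ν / (C₀ (exp(2νT) − 1))) · exp(νt) for t ∈ [0,T], α(T) = exp(νT) / (ν (exp(2νT) − 1)), and β(T) = 4ν² exp(2νT) / (C₀² (exp(2νT) − 1)²). Then ∫₀^T η̄(t)^{2k} exp(−νt) · ( 1 − C₀ ∫₀^t η̄(s) exp(νs) ds ) dt ≤ β(T)^k · α(T). -/

import Mathlib

open Real

theorem kth_moment_integral_bound (T ν C₀ : ℝ) (hT : 0 < T) (hν : 0 < ν) (hC₀ : 0 < C₀)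
    (k : ℕ) (hk : 1 ≤ k)
    (ηb : ℝ → ℝ)
    (hηb : ∀ t, ηb t = 2 * ν / (C₀ * (Real.exp (2 * ν * T) - 1)) * Real.exp (ν * t))
    (α β : ℝ)
    (hα : α = Real.exp (ν * T) / (ν * (Real.exp (2 * ν * T) - 1)))
    (hβ : β = 4 * ν ^ 2 * Real.exp (2 * ν * T) / (C₀ ^ 2 * (Real.exp (2 * ν * T) - 1) ^ 2)) :
    ∫ t in (0:ℝ)..T,
        ηb t ^ (2 * k) * Real.exp (-ν * t) *
          (1 - C₀ * ∫ s in (0:ℝ)..t, ηb s * Real.exp (ν * s))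
      ≤ β ^ k * α := by
  have hE : 1 < Real.exp (2 * ν * T) := Real.one_lt_exp_iff.mpr (by positivity)
  set E := Real.exp (2 * ν * T) with hEdef
  have hE1 : 0 < E - 1 := by linarith
  have hE0 : 0 < E := by linarith
  have hexpint : ∀ (a t : ℝ), a ≠ 0 →
      ∫ s in (0:ℝ)..t, Real.exp (a * s) = (Real.exp (a * t) - 1) / a := by
    intro a t ha
    rw [intervalIntegral.integral_comp_mul_left (fun x => Real.exp x) ha, integral_exp]
    simp
    field_simp
  have hinner : ∀ t, 1 - C₀ * ∫ s in (0:ℝ)..t, ηb s * Real.exp (ν * s)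
      = (E - Real.exp (2 * ν * t)) / (E - 1) := by
    intro t
    have h1 : ∀ s, ηb s * Real.exp (ν * s)
        = 2 * ν / (C₀ * (E - 1)) * Real.exp (2 * ν * s) := by
      intro s
      rw [hηb, mul_assoc, ← Real.exp_add]
      ring_nf
    simp_rw [h1]
    rw [intervalIntegral.integral_const_mul, hexpint _ _ (by positivity)]
    field_simp
    ring
  simp_rw [hinner]
  have hβE : β = (2 * ν / (C₀ * (E - 1))) ^ 2 * E := by
    rw [hβ]; field_simp; ring
  have hβ0 : 0 ≤ β := by rw [hβE]; positivity
  have hcη : Continuous ηb := by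
    have : ηb = fun t => 2 * ν / (C₀ * (E - 1)) * Real.exp (ν * t) := funext hηb
    rw [this]; fun_prop
  have hmono : ∫ t in (0:ℝ)..T, ηb t ^ (2 * k) * Real.exp (-ν * t) *
      ((E - Real.exp (2 * ν * t)) / (E - 1))
      ≤ ∫ t in (0:ℝ)..T, β ^ k / (E - 1) * Real.exp (ν * t) := by
    apply intervalIntegral.integral_mono_on hT.le
    · exact Continuous.intervalIntegrable (by fun_prop) _ _
    · exact Continuous.intervalIntegrable (by fun_prop) _ _
    · intro t ht
      obtain ⟨m, rfl⟩ : ∃ m, k = m + 1 := ⟨k - 1, by omega⟩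
      have hte : Real.exp (2 * ν * t) ≤ E :=
        Real.exp_le_exp.mpr (mul_le_mul_of_nonneg_left ht.2 (by positivity))
      have hsq : Real.exp (2 * ν * t) = Real.exp (ν * t) * Real.exp (ν * t) := by
        rw [← Real.exp_add]; ring_nf
      have hinv : Real.exp (ν * t) * Real.exp (-ν * t) = 1 := by
        rw [← Real.exp_add]; simp
      have heq : ηb t ^ (2 * (m + 1)) * Real.exp (-ν * t)
          = ((2 * ν / (C₀ * (E - 1))) ^ 2) ^ (m + 1) * Real.exp (2 * ν * t) ^ m
            * Real.exp (ν * t) := by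
        rw [pow_mul, hηb, mul_pow, mul_pow, pow_succ (Real.exp (ν * t) ^ 2) m, hsq, ← pow_two]
        linear_combination (((2 * ν / (C₀ * (E - 1))) ^ 2) ^ (m + 1)
          * (Real.exp (ν * t) ^ 2) ^ m * Real.exp (ν * t)) * hinv
      rw [heq, hβE, mul_pow _ E]
      have h2 : Real.exp (2 * ν * t) ^ m * ((E - Real.exp (2 * ν * t)) / (E - 1))
          ≤ E ^ m * (E / (E - 1)) := by
        have h3 : E - Real.exp (2 * ν * t) ≤ E := by
          linarith [Real.exp_pos (2 * ν * t)]
        have h4 : 0 ≤ E - Real.exp (2 * ν * t) := by linarith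
        gcongr
      have h5 : 0 ≤ ((2 * ν / (C₀ * (E - 1))) ^ 2) ^ (m + 1) * Real.exp (ν * t) := by
        positivity
      have h6 := mul_le_mul_of_nonneg_left h2 h5
      calc _ = _ := by ring
        _ ≤ _ := h6
        _ = _ := by ring
  refine hmono.trans ?_
  rw [intervalIntegral.integral_const_mul, hexpint _ _ hν.ne', hα]
  have : β ^ k / (E - 1) * ((Real.exp (ν * T) - 1) / ν)
      = β ^ k * ((Real.exp (ν * T) - 1) / (ν * (E - 1))) := by
    field_simp
  rw [this]
  gcongr
  linarith
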